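/- arXiv:1205.4889 — 2 statements merged into one kernel-verified Lean document; each statement's English description precedes it below -/
import Mathlib

section
/- Let d ≥ 0, let (σ_i)_{i∈Π} be a Nash equilibrium in the truncated game G^d and let ρ be its outcome. Assume ρ has a prefix αβγ, where β contains at least one vertex, such that Visit(α) = Visit(αβγ), last(α) = last(αβ), |αβ| ≤ l·|V| and |αβγ| = (l+1)·|V| for some l ≥ 1. Let j ∈ Π be such that α does not visit F_j. Then for every history hu of G consistent with (σ_i)_{i≠j} and such that |hu| ≤ |αβ|, the coalition of the players i ≠ j wins the qualitative two-player zero-sum game G_j from the vertex u. -/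
/-- A quantitative multiplayer reachability game: a finite directed graph whose
vertex set is partitioned among the players (via `owner`), with an initial vertex `v0`,
an edge relation `E` such that every vertex has an outgoing edge, and a goal set
`goal i` for each player `i`. -/
structure ReachGame (P : Type) (V : Type) where
  owner : V → P
  v0 : V
  E : V → V → Prop
  total : ∀ v : V, ∃ w : V, E v w
  goal : P → Set V

namespace ReachGame

variable {P V : Type} [DecidableEq P] (G : ReachGame P V)

/-- The last vertex of a history (with default `v0`). -/
def lastV (h : List V) : V := h.getLastD G.v0

/-- A history: a nonempty finite path in the graph starting at `v0`. -/
def IsHistory (h : List V) : Prop :=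
  h ≠ [] ∧ h.head? = some G.v0 ∧ List.Chain' G.E h

/-- A play: an infinite path starting at `v0`. -/
def IsPlay (ρ : ℕ → V) : Prop :=
  ρ 0 = G.v0 ∧ ∀ k : ℕ, G.E (ρ k) (ρ (k + 1))

/-- `σ` is a (total encoding of a) strategy of player `i`: on every history ending in
a vertex owned by `i` it chooses a successor along an edge. -/
def IsStrategy (i : P) (σ : List V → V) : Prop :=
  ∀ h : List V, G.IsHistory h → G.owner (G.lastV h) = i → G.E (G.lastV h) (σ h)

/-- A strategy profile: one strategy per player. -/
def IsProfile (prof : P → List V → V) : Prop :=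
  ∀ i : P, G.IsStrategy i (prof i)

/-- The history of length `n` (i.e. with `n` edges) obtained by letting the players
follow the profile `prof` from `v0`. -/
def outHist (prof : P → List V → V) : ℕ → List V
  | 0 => [G.v0]
  | n + 1 => outHist prof n ++ [prof (G.owner (G.lastV (outHist prof n))) (outHist prof n)]

/-- The outcome play of the strategy profile `prof`. -/
def outcome (prof : P → List V → V) (n : ℕ) : V :=
  G.lastV (G.outHist prof n)

/-- The cost of player `i` for the play `ρ`: the least `l` with `ρ l ∈ goal i`,
and `⊤` (`+∞`) if there is no such `l`. -/
noncomputable def cost (i : P) (ρ : ℕ → V) : ℕ∞ :=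
  sInf {n : ℕ∞ | ∃ l : ℕ, n = (l : ℕ∞) ∧ ρ l ∈ G.goal i}

/-- Nash equilibrium: no player can strictly decrease his cost by a unilateral
deviation. -/
def IsNash (prof : P → List V → V) : Prop :=
  ∀ (j : P) (σ' : List V → V), G.IsStrategy j σ' →
    G.cost j (G.outcome prof) ≤ G.cost j (G.outcome (Function.update prof j σ'))

/-- `h ≈_σ h'` : the strategy `σ` of player `i` behaves the same after `h` and `h'`,
i.e. `σ (h ++ δ) = σ (h' ++ δ)` for every suffix `δ` making both `h ++ δ` and
`h' ++ δ` histories ending in a vertex of player `i`. -/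
def MemEq (i : P) (σ : List V → V) (h h' : List V) : Prop :=
  ∀ δ : List V,
    G.IsHistory (h ++ δ) → G.owner (G.lastV (h ++ δ)) = i →
    G.IsHistory (h' ++ δ) → G.owner (G.lastV (h' ++ δ)) = i →
    σ (h ++ δ) = σ (h' ++ δ)

/-- A strategy of player `i` is finite-memory if the relation `≈_σ` has finitely many
equivalence classes on histories, i.e. there is a finite set of histories meeting
every class. -/
def FiniteMemory (i : P) (σ : List V → V) : Prop :=
  ∃ S : Finset (List V), ∀ h : List V, G.IsHistory h →
    ∃ h' ∈ S, G.IsHistory h' ∧ G.MemEq i σ h h'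

/-- A profile is finite-memory if each of its strategies is. -/
def FiniteMemoryProfile (prof : P → List V → V) : Prop :=
  ∀ i : P, G.FiniteMemory i (prof i)

/-- `Visit h`: the set of players whose goal set is visited by the finite path `h`. -/
def visitL (h : List V) : Set P := {i : P | ∃ v ∈ h, v ∈ G.goal i}

/-- The type of a strategy profile: the set of players whose goal set is visited by
the outcome. -/
def typeOf (prof : P → List V → V) : Set P :=
  {i : P | ∃ l : ℕ, G.outcome prof l ∈ G.goal i}

/-! ### The truncated game `G^d` -/

/-- A strategy of player `i` in the truncated game `G^d` : it chooses a successor on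
every history with less than `d` edges (list length `≤ d`) ending in a vertex of `i`. -/
def IsStrategyTrunc (d : ℕ) (i : P) (σ : List V → V) : Prop :=
  ∀ h : List V, G.IsHistory h → h.length ≤ d → G.owner (G.lastV h) = i →
    G.E (G.lastV h) (σ h)

/-- A strategy profile of the truncated game `G^d`. -/
def IsProfileTrunc (d : ℕ) (prof : P → List V → V) : Prop :=
  ∀ i : P, G.IsStrategyTrunc d i (prof i)

/-- The cost of player `i` for a finite play `h` (a list of vertices): the least
position of `h` lying in `goal i`, and `⊤` if `goal i` is not visited. -/
noncomputable def costList (i : P) (h : List V) : ℕ∞ :=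
  sInf {n : ℕ∞ | ∃ l : ℕ, n = (l : ℕ∞) ∧ l < h.length ∧ h.getD l G.v0 ∈ G.goal i}

/-- Nash equilibrium of the truncated game `G^d` (whose plays are the histories with
exactly `d` edges). -/
def IsNashTrunc (d : ℕ) (prof : P → List V → V) : Prop :=
  ∀ (j : P) (σ' : List V → V), G.IsStrategyTrunc d j σ' →
    G.costList j (G.outHist prof d) ≤
      G.costList j (G.outHist (Function.update prof j σ') d)

/-- The type of a strategy profile of the truncated game `G^d`. -/
def typeOfTrunc (d : ℕ) (prof : P → List V → V) : Set P :=
  G.visitL (G.outHist prof d)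

end ReachGame

/-- The list `ρ₀ … ρ_k` of the first `k + 1` vertices of the infinite path `ρ`. -/
def playPrefix {V : Type} (ρ : ℕ → V) (k : ℕ) : List V := (List.range (k + 1)).map ρ

namespace ReachGame

variable {P V : Type} [DecidableEq P] (G : ReachGame P V)

/-- An infinite path of the graph starting at the vertex `u`. -/
def IsPlayFrom (u : V) (ρ : ℕ → V) : Prop :=
  ρ 0 = u ∧ ∀ k : ℕ, G.E (ρ k) (ρ (k + 1))

/-- In the qualitative two-player zero-sum game `G_j`, the coalition of the players
`i ≠ j` (controlling the vertices not owned by `j`) wins from the vertex `u`: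
it has a strategy such that every play from `u` consistent with this strategy
never visits the goal set `goal j` of player `j`. -/
def CoalitionWins (j : P) (u : V) : Prop :=
  ∃ τ : List V → V,
    (∀ h : List V, h ≠ [] → h.head? = some u → List.Chain' G.E h →
      G.owner (h.getLastD u) ≠ j → G.E (h.getLastD u) (τ h)) ∧
    (∀ ρ : ℕ → V, G.IsPlayFrom u ρ →
      (∀ k : ℕ, G.owner (ρ k) ≠ j → ρ (k + 1) = τ (playPrefix ρ k)) →
      ∀ l : ℕ, ρ l ∉ G.goal j)

/-- The history `h` is consistent with the strategies `prof i` of all the players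
`i ≠ j`: every move of `h` from a vertex not owned by `j` follows `prof`. -/
def ConsistentExcept (prof : P → List V → V) (j : P) (h : List V) : Prop :=
  ∀ k : ℕ, k + 1 < h.length → G.owner (h.getD k G.v0) ≠ j →
    h.getD (k + 1) G.v0 = prof (G.owner (h.getD k G.v0)) (h.take (k + 1))

end ReachGame

namespace ReachGame

variable {P V : Type} [DecidableEq P] (G : ReachGame P V)

/-- Attractor of player `j`: vertices from which `j` can force his goal in `n` steps. -/
def attr (j : P) : ℕ → Set V
  | 0 => G.goal j
  | n + 1 => attr j n ∪ {v | (G.owner v = j ∧ ∃ w, G.E v w ∧ w ∈ attr j n) ∨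
      (G.owner v ≠ j ∧ ∀ w, G.E v w → w ∈ attr j n)}

lemma attr_mono (j : P) : Monotone (G.attr j) :=
  monotone_nat_of_le_succ fun n => by
    intro v hv
    exact Or.inl hv

lemma attr_stable (j : P) (n : ℕ) (hn : G.attr j (n + 1) = G.attr j n) (k : ℕ) :
    G.attr j (n + k) = G.attr j n := by
  induction k with
  | zero => rfl
  | succ k ih =>
    have : G.attr j (n + k + 1) = G.attr j (n + 1) := by
      simp only [attr, ih]
    rw [← Nat.add_assoc, this, hn]

lemma attr_card [Fintype V] (j : P) :
    G.attr j (Fintype.card V + 1) = G.attr j (Fintype.card V) := by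
  classical
  by_cases hex : ∃ n ≤ Fintype.card V, G.attr j (n + 1) = G.attr j n
  · obtain ⟨n, hn, he⟩ := hex
    obtain ⟨k, hk⟩ := Nat.exists_eq_add_of_le hn
    rw [hk, Nat.add_assoc, attr_stable G j n he, attr_stable G j n he]
  · exfalso
    push Not at hex
    have key : ∀ n, n ≤ Fintype.card V + 1 → n ≤ (G.attr j n).ncard := by
      intro n
      induction n with
      | zero => intro _; exact Nat.zero_le _
      | succ n ih =>
        intro hn
        have h1 := ih (by omega)
        have h2 : (G.attr j n).ncard < (G.attr j (n + 1)).ncard := by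
          apply Set.ncard_lt_ncard _ (Set.toFinite _)
          exact lt_of_le_of_ne (G.attr_mono j (Nat.le_succ n)) (hex n (by omega)).symm
        omega
    have h1 := key _ le_rfl
    have h2 : (G.attr j (Fintype.card V + 1)).ncard ≤ Fintype.card V := by
      rw [← Nat.card_eq_fintype_card]
      exact Set.ncard_le_card _
    omega

lemma coalition_of_not_attr [Fintype V] (j : P) (u : V)
    (hu : u ∉ G.attr j (Fintype.card V)) : G.CoalitionWins j u := by
  classical
  have hstep : ∀ v, ∃ w, G.E v w ∧
      (v ∉ G.attr j (Fintype.card V) → G.owner v ≠ j → w ∉ G.attr j (Fintype.card V)) := by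
    intro v
    by_cases hc : v ∉ G.attr j (Fintype.card V) ∧ G.owner v ≠ j
    · have h1 := hc.1
      rw [← G.attr_card j] at h1
      by_contra hcon
      push Not at hcon
      exact h1 (Or.inr (Or.inr ⟨hc.2, fun w hw => (hcon w hw).2.2⟩))
    · obtain ⟨w, hw⟩ := G.total v
      exact ⟨w, hw, fun a b => absurd ⟨a, b⟩ hc⟩
  choose f hf hf' using hstep
  refine ⟨fun h => f (h.getLastD u), fun h _ _ _ _ => hf _, ?_⟩
  intro ρ hρ hc
  have hlast : ∀ k, (playPrefix ρ k).getLastD u = ρ k := by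
    intro k
    simp [playPrefix, List.range_succ]
  have hall : ∀ k, ρ k ∉ G.attr j (Fintype.card V) := by
    intro k
    induction k with
    | zero => rw [hρ.1]; exact hu
    | succ k ih =>
      by_cases ho : G.owner (ρ k) = j
      · intro hmem
        apply ih
        rw [← G.attr_card j]
        exact Or.inr (Or.inl ⟨ho, _, hρ.2 k, hmem⟩)
      · have := hc k ho
        simp only [hlast] at this
        rw [this]
        exact hf' _ ih ho
  intro k hk
  exact hall k (G.attr_mono j (Nat.zero_le _) hk)

lemma outHist_length (prof : P → List V → V) (n : ℕ) : (G.outHist prof n).length = n + 1 := by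
  induction n with
  | zero => rfl
  | succ n ih => simp [outHist, ih]

lemma outHist_prefix (prof : P → List V → V) (n k : ℕ) :
    G.outHist prof n <+: G.outHist prof (n + k) := by
  induction k with
  | zero => exact List.prefix_rfl
  | succ k ih => exact ih.trans (List.prefix_append _ _)

lemma lastV_eq_getD (h : List V) : G.lastV h = h.getD (h.length - 1) G.v0 := by
  unfold lastV
  rw [List.getLastD_eq_getLast?, List.getLast?_eq_getElem?, List.getD_eq_getElem?_getD]

lemma outHist_getD (prof : P → List V → V) (n d : ℕ) (hnd : n ≤ d) :
    (G.outHist prof d).getD n G.v0 = G.lastV (G.outHist prof n) := by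
  obtain ⟨k, rfl⟩ := Nat.exists_eq_add_of_le hnd
  obtain ⟨t, ht⟩ := G.outHist_prefix prof n k
  rw [lastV_eq_getD, ← ht, outHist_length, List.getD_append]
  · rfl
  · rw [outHist_length]; omega

lemma lastV_outHist_succ (prof : P → List V → V) (n : ℕ) :
    G.lastV (G.outHist prof (n + 1)) =
      prof (G.owner (G.lastV (G.outHist prof n))) (G.outHist prof n) := by
  conv_lhs => rw [outHist]
  simp [lastV]

lemma outHist_isHistory (d : ℕ) (prof : P → List V → V) (hp : G.IsProfileTrunc d prof)
    (n : ℕ) (hn : n ≤ d) : G.IsHistory (G.outHist prof n) := by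
  induction n with
  | zero => exact ⟨by simp [outHist], rfl, List.isChain_singleton _⟩
  | succ n ih =>
    have ih := ih (by omega)
    have hE := hp _ _ ih (by rw [outHist_length]; omega) rfl
    obtain ⟨h1, h2, h3⟩ := ih
    refine ⟨by simp [outHist], ?_, ?_⟩
    · rw [outHist, List.head?_append, h2]; rfl
    · rw [outHist]
      apply List.IsChain.append h3 (List.isChain_singleton _)
      intro x hx y hy
      simp only [List.head?_cons, Option.mem_def, Option.some.injEq] at hy
      subst hy
      have : G.lastV (G.outHist prof n) = x := by
        unfold lastV
        rw [List.getLastD_eq_getLast?, Option.mem_def.1 hx]; rfl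
      rw [this] at hE ⊢
      exact hE

lemma exists_attr_move (j : P) (v : V) : ∃ w, G.E v w ∧
    (G.owner v = j → ∀ n, v ∈ G.attr j (n + 1) → v ∈ G.goal j ∨ w ∈ G.attr j n) := by
  classical
  by_cases hc : G.owner v = j ∧ v ∉ G.goal j ∧ ∃ n, v ∈ G.attr j n
  · obtain ⟨ho, hg, hex⟩ := hc
    have hm := Nat.find_spec hex
    have hmin := fun n hn => Nat.find_min hex (m := n) hn
    have hle := fun n (hn : v ∈ G.attr j n) => Nat.find_min' hex hn
    generalize Nat.find hex = m at hm hmin hle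
    cases m with
    | zero => exact absurd hm hg
    | succ m =>
      rcases hm with hm | ⟨_, w, hw, hwa⟩ | ⟨hno, _⟩
      · exact absurd hm (hmin m (by omega))
      · refine ⟨w, hw, fun _ n hn => Or.inr (G.attr_mono j ?_ hwa)⟩
        have := hle _ hn
        omega
      · exact absurd ho hno
  · obtain ⟨w, hw⟩ := G.total v
    refine ⟨w, hw, fun ho n hn => Or.inl ?_⟩
    by_contra hg
    exact hc ⟨ho, hg, _, hn⟩

lemma deviation (d : ℕ) (prof : P → List V → V) (hprof : G.IsProfileTrunc d prof) (j : P)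
    (h : List V) (hh : G.IsHistory h) (hcons : G.ConsistentExcept prof j h) (N : ℕ)
    (hd : h.length - 1 + N ≤ d) (hA : G.lastV h ∈ G.attr j N) :
    ∃ σ', G.IsStrategyTrunc d j σ' ∧ ∃ k ≤ h.length - 1 + N,
      G.lastV (G.outHist (Function.update prof j σ') k) ∈ G.goal j := by
  classical
  choose f hf hf' using G.exists_attr_move j
  let σ' : List V → V := fun g =>
    if g <+: h ∧ g ≠ h then h.getD g.length G.v0 else f (G.lastV g)
  have hpos : 0 < h.length := List.length_pos_iff.2 hh.1
  have hσ' : G.IsStrategyTrunc d j σ' := by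
    intro g hg _ _
    by_cases hc : g <+: h ∧ g ≠ h
    · simp only [σ', if_pos hc]
      obtain ⟨⟨t, rfl⟩, hne⟩ := hc
      cases t with
      | nil => simp at hne
      | cons a t =>
        have h3 := hh.2.2
        have hgp : 0 < g.length := List.length_pos_iff.2 hg.1
        have := (List.isChain_iff_getElem.1 h3) (g.length - 1) (by simp; omega)
        have e : g.length - 1 + 1 = g.length := by omega
        rw [lastV_eq_getD]
        simp only [e] at this
        rw [List.getElem_append_left (by omega), List.getElem_append_right (by omega)] at this
        rw [List.getD_eq_getElem _ _ (by omega), List.getD_append_right _ _ _ _ le_rfl]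
        simpa using this
    · simp only [σ', if_neg hc]; exact hf _
  refine ⟨σ', hσ', ?_⟩
  have hprof' : G.IsProfileTrunc d (Function.update prof j σ') := by
    intro i
    by_cases hi : i = j
    · subst hi; simpa using hσ'
    · rw [Function.update_of_ne hi]; exact hprof i
  have hpre : ∀ k, k < h.length →
      G.outHist (Function.update prof j σ') k = h.take (k + 1) := by
    intro k
    induction k with
    | zero =>
      intro _
      obtain ⟨_, h2, _⟩ := hh
      cases h with
      | nil => simp at hpos
      | cons a t => simp at h2; simp [outHist, h2]
    | succ k ih =>
      intro hk
      have ih := ih (by omega)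
      have hl : G.lastV (h.take (k + 1)) = h.getD k G.v0 := by
        rw [lastV_eq_getD]
        have : (h.take (k + 1)).length = k + 1 := by simp; omega
        rw [this, List.getD_eq_getElem _ _ (by omega), List.getD_eq_getElem _ _ (by omega)]
        simp
      rw [outHist, ih, hl, List.take_succ_eq_append_getElem hk]
      congr 2
      rw [← List.getD_eq_getElem _ G.v0 hk]
      by_cases ho : G.owner (h.getD k G.v0) = j
      · rw [ho, Function.update_self]
        have hc : h.take (k + 1) <+: h ∧ h.take (k + 1) ≠ h := by
          refine ⟨List.take_prefix _ _, fun he => ?_⟩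
          have := congrArg List.length he
          simp at this
          omega
        simp only [σ', if_pos hc]
        congr 1
        simp; omega
      · rw [Function.update_of_ne ho]
        exact (hcons k hk ho).symm
  by_contra hcon
  push Not at hcon
  have key : ∀ n, n ≤ N →
      G.lastV (G.outHist (Function.update prof j σ') (h.length - 1 + n)) ∈ G.attr j (N - n) := by
    intro n
    induction n with
    | zero =>
      intro _
      rw [Nat.add_zero, hpre _ (by omega), List.take_of_length_le (by omega)]
      exact hA
    | succ n ih =>
      intro hn
      have ih := ih (by omega)
      have hng := hcon (h.length - 1 + n) (by omega)
      have hist := G.outHist_isHistory d _ hprof' (h.length - 1 + n) (by omega)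
      have hE := hprof' _ _ hist (by rw [outHist_length]; omega) rfl
      have e : N - n = N - (n + 1) + 1 := by omega
      rw [e] at ih
      have hlen := G.outHist_length (Function.update prof j σ') (h.length - 1 + n)
      rw [← Nat.add_assoc, lastV_outHist_succ]
      generalize G.outHist (Function.update prof j σ') (h.length - 1 + n) = g at *
      by_cases ho : G.owner (G.lastV g) = j
      · have hc : ¬ (g <+: h ∧ g ≠ h) := by
          rintro ⟨h1, h2⟩
          exact h2 (h1.eq_of_length_le (by omega))
        rw [ho, Function.update_self]
        simp only [σ', if_neg hc]
        exact (hf' _ ho _ ih).resolve_left hng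
      · have ih2 : ∀ m, G.lastV g ∈ G.attr j (m + 1) → ∀ w, G.E (G.lastV g) w →
            w ∈ G.attr j m := by
          intro m
          induction m with
          | zero =>
            rintro (h1 | ⟨h1, _⟩ | ⟨_, h1⟩)
            · exact absurd h1 hng
            · exact absurd h1 ho
            · exact h1
          | succ m ihm =>
            rintro (h1 | ⟨h1, _⟩ | ⟨_, h1⟩)
            · exact fun w hw => G.attr_mono j (Nat.le_succ m) (ihm h1 w hw)
            · exact absurd h1 ho
            · exact h1
        exact ih2 _ ih _ hE
  have := key N le_rfl
  rw [Nat.sub_self] at this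
  exact hcon _ le_rfl this

end ReachGame

/-- Let `(σᵢ)` be a Nash equilibrium of the truncated game `G^d` whose
outcome has a prefix `αβγ` (with `β` nonempty) such that `Visit(α) = Visit(αβγ)`,
`last(α) = last(αβ)`, `|αβ| ≤ l·|V|` and `|αβγ| = (l+1)·|V|` for some `l ≥ 1`
(lengths counted in edges).  Let `j` be a player such that `α` does not visit `F_j`.
Then for every history `h` of `G` consistent with the strategies of the players `i ≠ j`
and with `|h| ≤ |αβ|`, the coalition of the players `i ≠ j` wins the qualitative
two-player zero-sum game `G_j` from the last vertex of `h`. -/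
theorem coalition_wins_after_deviation {P V : Type} [Fintype P] [DecidableEq P] [Fintype V]
    (G : ReachGame P V) (d : ℕ)
    (prof : P → List V → V)
    (hprof : G.IsProfileTrunc d prof) (hnash : G.IsNashTrunc d prof)
    (α β γ rest : List V) (hα : α ≠ []) (hβ : β ≠ [])
    (hdecomp : G.outHist prof d = α ++ β ++ γ ++ rest)
    (hvisit : G.visitL α = G.visitL (α ++ β ++ γ))
    (hlast : G.lastV α = G.lastV (α ++ β))
    (l : ℕ) (hl : 1 ≤ l)
    (hlen1 : (α ++ β).length - 1 ≤ l * Fintype.card V)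
    (hlen2 : (α ++ β ++ γ).length - 1 = (l + 1) * Fintype.card V)
    (j : P) (hj : j ∉ G.visitL α)
    (h : List V) (hh : G.IsHistory h)
    (hcons : G.ConsistentExcept prof j h)
    (hhlen : h.length - 1 ≤ (α ++ β).length - 1) :
    G.CoalitionWins j (G.lastV h) := by
  by_contra hw
  have hA : G.lastV h ∈ G.attr j (Fintype.card V) := by
    by_contra hA
    exact hw (G.coalition_of_not_attr j _ hA)
  have hlenD := congrArg List.length hdecomp
  rw [G.outHist_length, List.length_append] at hlenD
  have hαp : 0 < α.length := List.length_pos_iff.2 hα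
  have hpos : 0 < (α ++ β ++ γ).length := by
    simp only [List.length_append]; omega
  have hmul : (l + 1) * Fintype.card V = l * Fintype.card V + Fintype.card V := by ring
  obtain ⟨σ', hσ', k, hk, hgoal⟩ := G.deviation d prof hprof j h hh hcons (Fintype.card V)
    (by omega) hA
  have hn := hnash j σ' hσ'
  have h1 : G.costList j (G.outHist (Function.update prof j σ') d) ≤ (k : ℕ∞) := by
    apply sInf_le
    refine ⟨k, rfl, ?_, ?_⟩
    · rw [G.outHist_length]; omega
    · rw [G.outHist_getD _ _ _ (by omega)]; exact hgoal
  have h2 : ((k + 1 : ℕ) : ℕ∞) ≤ G.costList j (G.outHist prof d) := by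
    apply le_sInf
    rintro _ ⟨p, rfl, hp, hpg⟩
    rw [Nat.cast_le]
    by_contra hlt
    have hp' : p < (α ++ β ++ γ).length := by omega
    rw [hdecomp, List.getD_append _ _ _ _ hp', List.getD_eq_getElem _ _ hp'] at hpg
    apply hj
    rw [hvisit]
    exact ⟨_, List.getElem_mem hp', hpg⟩
  have h3 := (h2.trans hn).trans h1
  rw [Nat.cast_le] at h3
  omega
end

section
/- Let (σ_i)_{i∈Π} be a strategy profile in a quantitative multiplayer reachability game G with outcome ρ = λλ'ρ̄, where λ' contains at least one vertex, Visit(λ) = Visit(ρ) and last(λ) = last(λλ'). Then there exists a strategy profile (τ_i)_{i∈Π} with outcome λ(λ')^ω such that whenever some player j has a profitable deviation with respect to (τ_i)_{i∈Π}, player j also has a profitable deviation with respect to (σ_i)_{i∈Π}. -/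
namespace ReachGame

section Helpers

variable {P V : Type} (G : ReachGame P V)

/-- The prefix with `n` vertices of an infinite sequence. -/
def pre (α : ℕ → V) (n : ℕ) : List V := (List.range n).map α

theorem pre_length (α : ℕ → V) (n : ℕ) : (pre α n).length = n := by simp [pre]

theorem pre_succ (α : ℕ → V) (n : ℕ) : pre α (n + 1) = pre α n ++ [α n] := by
  simp [pre, List.range_succ]

theorem pre_getD (α : ℕ → V) (n k : ℕ) (d : V) (h : k < n) : (pre α n).getD k d = α k := by
  simp [pre, h]

theorem pre_congr (α β : ℕ → V) (n : ℕ) (h : ∀ k < n, α k = β k) : pre α n = pre β n := by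
  unfold pre
  apply List.map_congr_left
  intro a ha
  exact h a (List.mem_range.1 ha)

theorem lastV_append (l : List V) (v : V) : G.lastV (l ++ [v]) = v := by
  simp [lastV]

theorem lastV_pre (α : ℕ → V) (n : ℕ) : G.lastV (pre α (n + 1)) = α n := by
  rw [pre_succ, lastV_append]

theorem isHistory_pre (α : ℕ → V) (hα : G.IsPlay α) (n : ℕ) : G.IsHistory (pre α (n + 1)) := by
  refine ⟨?_, ?_, ?_⟩
  · rw [pre_succ]; simp
  · simp [pre, List.range_succ_eq_map, hα.1]
  · show List.IsChain G.E _
    rw [List.isChain_iff_getElem]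
    intro i hi
    simp only [pre, List.getElem_map, List.getElem_range]
    exact hα.2 i

theorem outHist_eq (prof : P → List V → V) (n : ℕ) :
    G.outHist prof n = pre (G.outcome prof) (n + 1) := by
  induction n with
  | zero => simp [pre, outHist, outcome, lastV]
  | succ n ih =>
    rw [pre_succ, ← ih]
    simp only [outcome, outHist, lastV_append]

theorem outcome_zero (prof : P → List V → V) : G.outcome prof 0 = G.v0 := by
  simp [outcome, outHist, lastV]

theorem outcome_succ (prof : P → List V → V) (n : ℕ) :
    G.outcome prof (n + 1) =
      prof (G.owner (G.outcome prof n)) (pre (G.outcome prof) (n + 1)) := by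
  rw [← outHist_eq]
  show G.lastV (G.outHist prof (n + 1)) = _
  simp only [outHist, lastV_append]
  rfl

theorem outcome_eq (prof : P → List V → V) (α : ℕ → V) (h0 : α 0 = G.v0)
    (h : ∀ k, prof (G.owner (α k)) (pre α (k + 1)) = α (k + 1)) : G.outcome prof = α := by
  have key : ∀ n, ∀ k ≤ n, G.outcome prof k = α k := by
    intro n
    induction n with
    | zero =>
      intro k hk
      obtain rfl : k = 0 := by omega
      rw [outcome_zero, h0]
    | succ n ih =>
      intro k hk
      rcases Nat.lt_or_ge k (n + 1) with h1 | h1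
      · exact ih k (by omega)
      · obtain rfl : k = n + 1 := by omega
        rw [outcome_succ, ih n le_rfl, ← h n]
        congr 1
        apply pre_congr
        intro k hk
        exact ih k (by omega)
  funext k
  exact key k k le_rfl

theorem history_last_eq (prof : P → List V → V) (hprof : G.IsProfile prof) :
    G.IsPlay (G.outcome prof) := by
  refine ⟨outcome_zero G prof, ?_⟩
  intro k
  induction k using Nat.strong_induction_on with
  | _ k ih =>
    have hh : G.IsHistory (pre (G.outcome prof) (k + 1)) := by
      refine ⟨?_, ?_, ?_⟩
      · rw [pre_succ]; simp
      · simp [pre, List.range_succ_eq_map, outcome_zero]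
      · show List.IsChain G.E _
        rw [List.isChain_iff_getElem]
        intro i hi
        rw [pre_length] at hi
        simp only [pre, List.getElem_map, List.getElem_range]
        exact ih i (by omega)
    have := hprof (G.owner (G.outcome prof k)) _ hh (by rw [lastV_pre])
    rw [lastV_pre] at this
    rw [outcome_succ]
    exact this

open Classical in
/-- Follow the play `α` as long as possible, otherwise use `σ`. -/
noncomputable def follow (α : ℕ → V) (σ : List V → V) (h : List V) : V :=
  if h = pre α h.length then α h.length else σ h

theorem follow_pre (α : ℕ → V) (σ : List V → V) (n : ℕ) : follow α σ (pre α n) = α n := by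
  simp [follow, pre_length]

theorem follow_ne (α β : ℕ → V) (σ : List V → V) (n p : ℕ) (hp : p < n) (h : β p ≠ α p) :
    follow α σ (pre β n) = σ (pre β n) := by
  unfold follow
  rw [if_neg]
  intro h1
  rw [pre_length] at h1
  apply h
  rw [← pre_getD β n p (β p) hp, h1, pre_getD _ _ _ _ hp]

theorem isStrategy_follow (j : P) (α : ℕ → V) (σ : List V → V) (hα : G.IsPlay α)
    (hσ : G.IsStrategy j σ) : G.IsStrategy j (follow α σ) := by
  intro h hh ho
  by_cases h1 : h = pre α h.length
  · have h2 : follow α σ h = α h.length := by simp only [follow, if_pos h1]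
    rw [h2]
    obtain ⟨n, hn⟩ : ∃ n, h.length = n + 1 :=
      ⟨h.length - 1, by have := List.length_pos_iff.2 hh.1; omega⟩
    rw [hn] at h1 ⊢
    rw [h1, lastV_pre]
    exact hα.2 n
  · have h2 : follow α σ h = σ h := by simp only [follow, if_neg h1]
    rw [h2]
    exact hσ h hh ho

open Classical in
/-- Use `σ` if its choice is along an edge, otherwise any edge. -/
noncomputable def legal (σ : List V → V) (h : List V) : V :=
  if G.E (G.lastV h) (σ h) then σ h else (G.total (G.lastV h)).choose

theorem isStrategy_legal (j : P) (σ : List V → V) : G.IsStrategy j (G.legal σ) := by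
  intro h _ _
  unfold legal
  split_ifs with h1
  · exact h1
  · exact (G.total (G.lastV h)).choose_spec

/-- First index at which `h` differs from `α`. -/
noncomputable def devIdx (α : ℕ → V) (h : List V) : ℕ := sInf {k | h.getD k G.v0 ≠ α k}

theorem devIdx_pre (α β : ℕ → V) (n p : ℕ) (hp : p < n) (h : β p ≠ α p)
    (hlt : ∀ k < p, β k = α k) : G.devIdx α (pre β n) = p := by
  unfold devIdx
  apply le_antisymm
  · apply Nat.sInf_le
    show (pre β n).getD p G.v0 ≠ α p
    rwa [pre_getD _ _ _ _ hp]
  · apply le_csInf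
    · refine ⟨p, ?_⟩
      show (pre β n).getD p G.v0 ≠ α p
      rwa [pre_getD _ _ _ _ hp]
    · intro k hk
      by_contra hlt'
      push Not at hlt'
      apply hk
      rw [pre_getD _ _ _ _ (by omega)]
      exact hlt k hlt'

theorem splice_pre (ρ β : ℕ → V) (s p k : ℕ) (hk : p ≤ k) :
    pre ρ (s + 1) ++ (pre β (k + 1)).drop p =
      pre (fun x => if x ≤ s then ρ x else β (x - (s + 1) + p)) (s + 1 + (k - p) + 1) := by
  apply List.ext_getElem
  · simp [pre]; omega
  · intro i h1 h2
    simp only [pre, List.getElem_append, List.getElem_map, List.getElem_range, List.getElem_drop,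
      List.length_map, List.length_range]
    split_ifs with h3 h4 h4
    · rfl
    · omega
    · omega
    · congr 1; omega

theorem cost_lt_iff (i : P) (ρ : ℕ → V) (c : ℕ∞) :
    G.cost i ρ < c ↔ ∃ l : ℕ, (l : ℕ∞) < c ∧ ρ l ∈ G.goal i := by
  unfold cost
  rw [sInf_lt_iff]
  constructor
  · rintro ⟨_, ⟨l, rfl, hl⟩, h⟩
    exact ⟨l, h, hl⟩
  · rintro ⟨l, h, hl⟩
    exact ⟨_, ⟨l, rfl, hl⟩, h⟩

theorem cost_le (i : P) (ρ : ℕ → V) (l : ℕ) (h : ρ l ∈ G.goal i) : G.cost i ρ ≤ l :=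
  sInf_le ⟨l, rfl, h⟩

/-- Abstract form of the result. -/
theorem abstract_repeat [DecidableEq P] (prof : P → List V → V) (hprof : G.IsProfile prof)
    (r : ℕ → ℕ) (hr0 : r 0 = 0) (hrle : ∀ k, r k ≤ k)
    (hrs : ∀ k, G.outcome prof (r (k + 1)) = G.outcome prof (r k + 1))
    (hcost : ∀ j, G.cost j (fun k => G.outcome prof (r k)) ≤ G.cost j (G.outcome prof)) :
    ∃ τ : P → List V → V, G.IsProfile τ ∧ (∀ k, G.outcome τ k = G.outcome prof (r k)) ∧
      (∀ (j : P) (σ' : List V → V), G.IsStrategy j σ' →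
        G.cost j (G.outcome (Function.update τ j σ')) < G.cost j (G.outcome τ) →
        ∃ σ'' : List V → V, G.IsStrategy j σ'' ∧
          G.cost j (G.outcome (Function.update prof j σ'')) <
            G.cost j (G.outcome prof)) := by
  set ρ := G.outcome prof with hρ
  have hρp : G.IsPlay ρ := history_last_eq G prof hprof
  set π : ℕ → V := fun k => ρ (r k) with hπ
  have hπp : G.IsPlay π := by
    refine ⟨by simp only [hπ, hr0, hρp.1], ?_⟩
    intro k
    simp only [hπ, hrs]
    exact hρp.2 _
  let τ : P → List V → V := fun i => follow π (G.legal fun h =>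
    prof i (pre ρ (r (G.devIdx π h - 1) + 1) ++ h.drop (G.devIdx π h)))
  have hτ : G.IsProfile τ := fun i => isStrategy_follow G i _ _ hπp (isStrategy_legal G i _)
  have hτo : G.outcome τ = π := by
    apply outcome_eq _ _ _ hπp.1
    intro k
    exact follow_pre _ _ _
  refine ⟨τ, hτ, fun k => by rw [hτo], ?_⟩
  intro j σ' hσ' hlt
  rw [hτo] at hlt
  set β := G.outcome (Function.update τ j σ') with hβ
  have hβp : G.IsPlay β := by
    apply history_last_eq
    intro i
    by_cases hi : i = j
    · subst hi; simpa using hσ'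
    · rw [Function.update_of_ne hi]; exact hτ i
  obtain ⟨q, hq, hqg⟩ := (cost_lt_iff _ _ _ _).1 hlt
  have hne : ∃ p, β p ≠ π p := by
    refine ⟨q, fun h => ?_⟩
    rw [h] at hqg
    exact absurd (cost_le G j π q hqg) (not_le.2 hq)
  classical
  obtain ⟨p, hp, hpmin⟩ : ∃ p, β p ≠ π p ∧ ∀ k < p, β k = π k :=
    ⟨Nat.find hne, Nat.find_spec hne, fun k hk => not_not.1 (Nat.find_min hne hk)⟩
  have hpq : p ≤ q := by
    by_contra h
    rw [hpmin q (by omega)] at hqg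
    exact absurd (cost_le G j π q hqg) (not_le.2 hq)
  obtain ⟨t, rfl⟩ : ∃ t, p = t + 1 := by
    cases p with
    | zero => exact absurd (hβp.1.trans hπp.1.symm) hp
    | succ t => exact ⟨t, rfl⟩
  have hbt : β t = ρ (r t) := hpmin t (by omega)
  have how : G.owner (β t) = j := by
    by_contra h
    apply hp
    have h1 : β (t + 1) = _ := outcome_succ G (Function.update τ j σ') t
    rw [← hβ, Function.update_of_ne h, pre_congr β π (t + 1) hpmin] at h1
    rw [h1]
    exact follow_pre _ _ _
  let γ : ℕ → V := fun x => if x ≤ r t then ρ x else β (x - (r t + 1) + (t + 1))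
  have hγ1 : ∀ x ≤ r t, γ x = ρ x := fun x hx => if_pos hx
  have hγ2 : ∀ k, γ (r t + 1 + k) = β (t + 1 + k) := by
    intro k
    show (if _ then _ else _) = _
    rw [if_neg (by omega)]
    congr 1; omega
  have hγp : G.IsPlay γ := by
    refine ⟨by rw [hγ1 0 (by omega), hρp.1], ?_⟩
    intro k
    rcases Nat.lt_trichotomy k (r t) with h | h | h
    · rw [hγ1 k (by omega), hγ1 (k + 1) (by omega)]; exact hρp.2 k
    · subst h
      rw [hγ1 _ le_rfl, ← hbt]
      exact (hγ2 0) ▸ hβp.2 t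
    · obtain ⟨d, rfl⟩ := Nat.exists_eq_add_of_le (show r t + 1 ≤ k from h)
      rw [hγ2, add_assoc (r t + 1) d 1, hγ2]; exact hβp.2 _
  refine ⟨follow γ (prof j), isStrategy_follow G j _ _ hγp (hprof j), ?_⟩
  have hout : G.outcome (Function.update prof j (follow γ (prof j))) = γ := by
    apply outcome_eq _ _ _ hγp.1
    intro k
    by_cases ho : G.owner (γ k) = j
    · rw [ho, Function.update_self]; exact follow_pre _ _ _
    rw [Function.update_of_ne ho]
    rcases Nat.lt_trichotomy k (r t) with h | h | h
    · rw [hγ1 k (by omega), hγ1 (k + 1) (by omega),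
        pre_congr γ ρ (k + 1) (fun x hx => hγ1 x (by omega))]
      exact (outcome_succ G prof k).symm
    · subst h
      rw [hγ1 _ le_rfl, ← hbt] at ho
      exact absurd how ho
    · obtain ⟨d, rfl⟩ := Nat.exists_eq_add_of_le (show r t + 1 ≤ k from h)
      have hEσ := hprof (G.owner (γ (r t + 1 + d))) _ (isHistory_pre G γ hγp (r t + 1 + d))
        (by rw [lastV_pre])
      rw [lastV_pre] at hEσ
      rw [add_assoc (r t + 1) d 1, hγ2 (d + 1)]
      rw [hγ2] at ho hEσ ⊢
      have h1 : β (t + 1 + d + 1) = _ := outcome_succ G (Function.update τ j σ') (t + 1 + d)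
      rw [← hβ, Function.update_of_ne ho] at h1
      rw [← add_assoc (t + 1) d 1, h1]
      show _ = follow π _ _
      rw [follow_ne π β _ _ (t + 1) (by omega) hp]
      have hdev := G.devIdx_pre π β (t + 1 + d + 1) (t + 1) (by omega) hp hpmin
      have hsp := splice_pre ρ β (r t) (t + 1) (t + 1 + d) (by omega)
      rw [show t + 1 + d - (t + 1) = d by omega] at hsp
      unfold legal
      simp only [hdev, Nat.add_sub_cancel, lastV_pre, hsp]
      exact (if_pos hEσ).symm
  rw [hout]
  obtain ⟨d, rfl⟩ := Nat.exists_eq_add_of_le hpq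
  rw [← hγ2] at hqg
  refine lt_of_le_of_lt (cost_le G j γ _ hqg) (lt_of_le_of_lt ?_ (lt_of_lt_of_le hq (hcost j)))
  have := hrle t
  exact_mod_cast (by omega : r t + 1 + d ≤ t + 1 + d)

end Helpers

end ReachGame

/-- Let `(σᵢ)` be a strategy profile with outcome `ρ = λλ'ρ̄`, where
`λ'` is nonempty, `Visit(λ) = Visit(ρ)` and `last(λ) = last(λλ')`.  Then there is a
strategy profile `(τᵢ)` with outcome `λ(λ')^ω` such that whenever some player `j` has
a profitable deviation w.r.t. `(τᵢ)`, he also has a profitable deviation w.r.t.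
`(σᵢ)`. -/
theorem repeat_cycle {P V : Type} [Fintype P] [DecidableEq P] [Fintype V]
    (G : ReachGame P V)
    (prof : P → List V → V) (hprof : G.IsProfile prof)
    (lam lam' : List V) (hlam : lam ≠ []) (hlam' : lam' ≠ [])
    (hpre : ∀ k : ℕ, k < (lam ++ lam').length →
      G.outcome prof k = (lam ++ lam').getD k G.v0)
    (hvisit : G.visitL lam = G.typeOf prof)
    (hlast : lam.getLastD G.v0 = (lam ++ lam').getLastD G.v0) :
    ∃ τ : P → List V → V,
      G.IsProfile τ ∧
      (∀ k : ℕ, G.outcome τ k =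
        if k < lam.length then G.outcome prof k
        else lam'.getD ((k - lam.length) % lam'.length) G.v0) ∧
      (∀ (j : P) (σ' : List V → V), G.IsStrategy j σ' →
        G.cost j (G.outcome (Function.update τ j σ')) < G.cost j (G.outcome τ) →
        ∃ σ'' : List V → V, G.IsStrategy j σ'' ∧
          G.cost j (G.outcome (Function.update prof j σ'')) <
            G.cost j (G.outcome prof)) := by
  classical
  have hm : 0 < lam.length := List.length_pos_iff.2 hlam
  have hn : 0 < lam'.length := List.length_pos_iff.2 hlam'
  have hA : ∀ k < lam.length, G.outcome prof k = lam.getD k G.v0 := by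
    intro k hk
    rw [hpre k (by simp; omega), List.getD_append _ _ _ _ hk]
  have hB : ∀ k < lam'.length, G.outcome prof (lam.length + k) = lam'.getD k G.v0 := by
    intro k hk
    rw [hpre _ (by simp; omega), List.getD_append_right _ _ _ _ (by omega)]
    congr 1; omega
  have hgl : ∀ l : List V, l.getLastD G.v0 = l.getD (l.length - 1) G.v0 := by
    intro l
    rw [List.getLastD_eq_getLast?, List.getLast?_eq_getElem?, List.getD_eq_getElem?_getD]
  have hcyc : G.outcome prof (lam.length - 1) =
      G.outcome prof (lam.length - 1 + lam'.length) := by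
    rw [hA _ (by omega), hpre _ (by simp; omega), ← hgl, hlast, hgl]
    congr 1; simp; omega
  let r : ℕ → ℕ := fun k => if k < lam.length then k
    else lam.length - 1 + (k - lam.length + 1) % lam'.length
  have hr1 : ∀ k < lam.length, r k = k := fun k hk => if_pos hk
  have hr2 : ∀ d, r (lam.length + d) = lam.length - 1 + (d + 1) % lam'.length := by
    intro d
    show (if _ then _ else _) = _
    rw [if_neg (by omega), Nat.add_sub_cancel_left]
  have hmod : ∀ d, G.outcome prof (lam.length - 1 + (d + 1) % lam'.length) =
      G.outcome prof (lam.length - 1 + (d % lam'.length + 1)) := by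
    intro d
    have h1 := Nat.mod_lt d hn
    rcases Nat.lt_or_ge (d % lam'.length + 1) lam'.length with h2 | h2
    · rw [← Nat.mod_add_mod, Nat.mod_eq_of_lt h2]
    · have h3 : d % lam'.length + 1 = lam'.length := by omega
      rw [← Nat.mod_add_mod, h3, Nat.mod_self, add_zero, hcyc]
  obtain ⟨τ, hτ, hτo, hdev⟩ := G.abstract_repeat prof hprof r (hr1 0 hm)
    (by
      intro k
      by_cases h : k < lam.length
      · rw [hr1 k h]
      · obtain ⟨d, rfl⟩ := Nat.exists_eq_add_of_le (not_lt.1 h)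
        rw [hr2]
        have := Nat.mod_le (d + 1) lam'.length
        omega)
    (by
      intro k
      by_cases h : k + 1 < lam.length
      · rw [hr1 _ h, hr1 k (by omega)]
      · obtain ⟨d, hd⟩ := Nat.exists_eq_add_of_le (not_lt.1 h)
        rw [hd, hr2, hmod]
        cases d with
        | zero => rw [hr1 k (by omega)]; congr 1; simp; omega
        | succ d =>
          obtain rfl : k = lam.length + d := by omega
          rw [hr2, add_assoc])
    (by
      intro j
      by_contra hcon
      rw [not_le] at hcon
      obtain ⟨l, hl, hlg⟩ := (ReachGame.cost_lt_iff _ _ _ _).1 hcon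
      have hj : j ∈ G.visitL lam := by rw [hvisit]; exact ⟨l, hlg⟩
      have hex : ∃ l' ≤ l, l' < lam.length ∧ G.outcome prof l' ∈ G.goal j := by
        by_cases h : l < lam.length
        · exact ⟨l, le_rfl, h, hlg⟩
        · obtain ⟨v, hv, hvg⟩ := hj
          obtain ⟨i, hi, rfl⟩ := List.getElem_of_mem hv
          refine ⟨i, by omega, hi, ?_⟩
          rw [hA i hi, List.getD_eq_getElem _ _ hi]
          exact hvg
      obtain ⟨l', hle, hlt, hg⟩ := hex
      have hc := G.cost_le j (fun k => G.outcome prof (r k)) l'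
        (by show G.outcome prof (r l') ∈ _; rwa [hr1 l' hlt])
      exact absurd (lt_of_lt_of_le hl hc) (by simpa using hle))
  refine ⟨τ, hτ, ?_, hdev⟩
  intro k
  rw [hτo]
  split_ifs with h
  · rw [hr1 k h]
  · obtain ⟨d, rfl⟩ := Nat.exists_eq_add_of_le (not_lt.1 h)
    rw [hr2, hmod, Nat.add_sub_cancel_left, ← hB _ (Nat.mod_lt d hn)]
    congr 1; omega
end
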